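/- Let N ≥ 2 be an integer, α > 1 and p > 0. For any R > 0 there exists a nondecreasing sequence (p_k)_{k≥1} of positive real numbers such that for every k ≥ 1 and every p > p_k there exist at least k pairwise distinct nonconstant positive functions h ∈ C²([0,R]) satisfying h''(r) + ((N-1)/r)·h'(r) = (1/α)·h(r)^{-α} − p for all r ∈ (0,R), together with h'(0) = 0 and h'(R) = 0 (i.e., at least k nontrivial smooth radial solutions of Δh = (1/α)h^{-α} − p in the ball B_R(0) with homogeneous Neumann boundary condition). -/

import Mathlib

open Set Filter

noncomputable section

/-- `h` is a (nonnegative, positive) smooth radial solution of `Δh = (1/α) h^(-α) - p`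
on the ball `B_R(0) ⊂ ℝ^N` with homogeneous Neumann boundary conditions, identified with
a positive `C²` function on `[0, R]` solving the radial ODE
`h'' + ((N-1)/r) h' = (1/α) h^(-α) - p` on `(0, R)` with `h'(0) = h'(R) = 0`. -/
def IsSmoothRadialSol (N : ℕ) (α p R : ℝ) (h : ℝ → ℝ) : Prop :=
  (∀ r ∈ Icc (0 : ℝ) R, 0 < h r) ∧
  ContDiffOn ℝ 2 h (Icc 0 R) ∧
  (∀ r ∈ Ioo (0 : ℝ) R,
    deriv (deriv h) r + ((N : ℝ) - 1) / r * deriv h r = 1 / α * h r ^ (-α) - p) ∧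
  derivWithin h (Icc 0 R) 0 = 0 ∧
  derivWithin h (Icc 0 R) R = 0

/-!
In units of the constant solution `ξ` the equation becomes `u'' + (n/s) u' = u ^ (-α) - 1`, with
`n = N - 1`, and the Neumann condition moves to `L = l R` with `ξ l² = p`, so that `L` is large
when `p` is. A solution satisfies it as soon as the Prüfer angle of `(u - 1, u')` at `L` is a
multiple of `π`. The solution starting from height `2` keeps turning around the equilibrium, which
brings its angle below `-kπ` for large `L`, whereas a solution starting high enough has not come
down to `1` at time `L`, so its angle stays above `-π`. The angle depends continuously on the
initial height, hence it takes each of the values `-π, …, -kπ`. The singularity of the force at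
`0` is harmless: for `α ≥ 1` its potential is unbounded there, so the decay of the energy keeps the
solutions away from `0`, and the force may be truncated.
-/

open scoped NNReal Topology BoundedContinuousFunction

/-! ### Radial means -/

/-- The weighted mean `∫₀¹ τⁿ g(sτ) dτ`. The solution of the radial Poisson equation
`w'' + (n/s) w' = g` with `w'(0) = 0` satisfies `w'(s) = s⁻ⁿ ∫₀ˢ xⁿ g(x) dx`, which is
`s * radialMean n g s`; in this form no division by `s` occurs. -/
def radialMean (n : ℕ) (g : ℝ → ℝ) (s : ℝ) : ℝ := ∫ τ in (0 : ℝ)..1, τ ^ n * g (s * τ)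

section RadialMean

variable {n : ℕ} {f g : ℝ → ℝ} {s : ℝ}

lemma intervalIntegrable_radialMean_integrand (hg : Continuous g) :
    IntervalIntegrable (fun τ ↦ τ ^ n * g (s * τ)) MeasureTheory.volume 0 1 :=
  Continuous.intervalIntegrable (by fun_prop) _ _

lemma continuous_radialMean_param {X : Type*} [TopologicalSpace X] {g : X → ℝ → ℝ}
    (hg : Continuous ↿g) {σ : X → ℝ} (hσ : Continuous σ) :
    Continuous fun x ↦ radialMean n (g x) (σ x) := by
  refine intervalIntegral.continuous_parametric_intervalIntegral_of_continuous' ?_ 0 1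
  exact (continuous_snd.pow n).mul
    (hg.comp (continuous_fst.prodMk ((hσ.comp continuous_fst).mul continuous_snd)))

lemma continuous_radialMean (hg : Continuous g) : Continuous (radialMean n g) :=
  continuous_radialMean_param (g := fun _ : ℝ ↦ g) (hg.comp continuous_snd) continuous_id

lemma radialMean_const (a : ℝ) : radialMean n (fun _ ↦ a) s = a / (n + 1) := by
  simp [radialMean, div_eq_inv_mul]

lemma radialMean_zero_right : radialMean n g 0 = g 0 / (n + 1) := by
  simp [radialMean, div_eq_inv_mul]

lemma radialMean_congr (h : ∀ τ ∈ Icc (0 : ℝ) 1, f (s * τ) = g (s * τ)) :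
    radialMean n f s = radialMean n g s := by
  refine intervalIntegral.integral_congr fun τ hτ ↦ ?_
  rw [uIcc_of_le zero_le_one] at hτ
  simp only [h τ hτ]

lemma radialMean_const_mul (a : ℝ) :
    radialMean n (fun x ↦ a * g x) s = a * radialMean n g s := by
  simp only [radialMean, mul_left_comm _ a, intervalIntegral.integral_const_mul]

lemma radialMean_comp_mul_left (l : ℝ) :
    radialMean n (fun x ↦ g (l * x)) s = radialMean n g (l * s) := by
  simp only [radialMean, mul_assoc]

lemma radialMean_sub (hf : Continuous f) (hg : Continuous g) :
    radialMean n (fun x ↦ f x - g x) s = radialMean n f s - radialMean n g s := by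
  simp only [radialMean, mul_sub]
  exact intervalIntegral.integral_sub (intervalIntegrable_radialMean_integrand hf)
    (intervalIntegrable_radialMean_integrand hg)

lemma radialMean_mono (hf : Continuous f) (hg : Continuous g) (h : ∀ x, f x ≤ g x) :
    radialMean n f s ≤ radialMean n g s :=
  intervalIntegral.integral_mono_on zero_le_one (intervalIntegrable_radialMean_integrand hf)
    (intervalIntegrable_radialMean_integrand hg) fun τ hτ ↦
      mul_le_mul_of_nonneg_left (h (s * τ)) (pow_nonneg hτ.1 n)

lemma div_le_radialMean (hg : Continuous g) {a : ℝ} (h : ∀ x, a ≤ g x) :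
    a / (n + 1) ≤ radialMean n g s :=
  radialMean_const a ▸ radialMean_mono continuous_const hg h

lemma abs_radialMean_le_radialMean (hg : Continuous g)
    (h : ∀ τ ∈ Icc (0 : ℝ) 1, |f (s * τ)| ≤ g (s * τ)) :
    |radialMean n f s| ≤ radialMean n g s := by
  refine intervalIntegral.norm_integral_le_of_norm_le (f := fun τ ↦ τ ^ n * f (s * τ)) zero_le_one
    (.of_forall fun τ hτ ↦ ?_) (intervalIntegrable_radialMean_integrand hg)
  rw [Real.norm_eq_abs, abs_mul, abs_of_nonneg (pow_nonneg hτ.1.le n)]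
  exact mul_le_mul_of_nonneg_left (h τ ⟨hτ.1.le, hτ.2⟩) (pow_nonneg hτ.1.le n)

lemma abs_radialMean_le {C : ℝ} (h : ∀ τ ∈ Icc (0 : ℝ) 1, |f (s * τ)| ≤ C) :
    |radialMean n f s| ≤ C := by
  have hC : 0 ≤ C := (abs_nonneg _).trans (h 0 ⟨le_rfl, zero_le_one⟩)
  calc |radialMean n f s| ≤ radialMean n (fun _ ↦ C) s :=
        abs_radialMean_le_radialMean continuous_const h
    _ = C / (n + 1) := radialMean_const C
    _ ≤ C := div_le_self hC (by simp)

lemma pow_succ_mul_radialMean :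
    s ^ (n + 1) * radialMean n g s = ∫ x in (0 : ℝ)..s, x ^ n * g x := by
  have hsubst := intervalIntegral.mul_integral_comp_mul_left (a := 0) (b := 1)
    (f := fun x ↦ x ^ n * g x) (c := s)
  simp only [mul_zero, mul_one] at hsubst
  rw [← hsubst, radialMean, pow_succ', mul_assoc, ← intervalIntegral.integral_const_mul]
  simp only [mul_pow, mul_assoc]

lemma hasDerivAt_pow_succ_mul_radialMean (hg : Continuous g) :
    HasDerivAt (fun t ↦ t ^ (n + 1) * radialMean n g t) (s ^ n * g s) s := by
  simp only [pow_succ_mul_radialMean]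
  have hint : Continuous fun x : ℝ ↦ x ^ n * g x := by fun_prop
  exact intervalIntegral.integral_hasDerivAt_right (hint.intervalIntegrable _ _)
    (hint.stronglyMeasurableAtFilter _ _) hint.continuousAt

lemma hasDerivAt_id_mul_of_continuousAt_zero (hg : ContinuousAt g 0) :
    HasDerivAt (fun t ↦ t * g t) (g 0) 0 := by
  rw [hasDerivAt_iff_tendsto_slope]
  refine (hg.tendsto.mono_left nhdsWithin_le_nhds).congr' ?_
  filter_upwards [self_mem_nhdsWithin] with t ht
  simp [slope_def_field, mul_div_cancel_left₀ (g t) ht]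

lemma hasDerivAt_id_mul_radialMean (hg : Continuous g) :
    HasDerivAt (fun t ↦ t * radialMean n g t) (g s - n * radialMean n g s) s := by
  rcases eq_or_ne s 0 with rfl | hs
  · convert hasDerivAt_id_mul_of_continuousAt_zero
      (continuous_radialMean (n := n) hg).continuousAt using 1
    rw [radialMean_zero_right]
    field
  · have hquot := (hasDerivAt_pow_succ_mul_radialMean (n := n) hg).div (hasDerivAt_pow n s)
      (pow_ne_zero n hs)
    refine (hquot.congr_of_eventuallyEq ?_).congr_deriv ?_
    · filter_upwards [isOpen_ne.mem_nhds hs] with t ht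
      simp only [Pi.div_apply]
      field [show t ≠ 0 from ht]
    · rcases n with _ | n
      · simp
      · push_cast [Nat.add_sub_cancel]
        field

end RadialMean

/-! ### The radial Poisson equation -/

/-- The solution `w` of the radial Poisson equation `w'' + (n/s) w' = g` with
`w(0) = w'(0) = 0`, that is, `∫₀ˢ t * radialMean n g t dt` rescaled to the unit interval. -/
def radialPotential (n : ℕ) (g : ℝ → ℝ) (s : ℝ) : ℝ := s ^ 2 * radialMean 1 (radialMean n g) s

section RadialPotential

variable {n : ℕ} {f g : ℝ → ℝ} {s : ℝ}

lemma continuous_radialPotential (hg : Continuous g) : Continuous (radialPotential n g) :=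
  (continuous_pow 2).mul (continuous_radialMean (continuous_radialMean hg))

lemma radialPotential_zero_right : radialPotential n g 0 = 0 := by simp [radialPotential]

lemma hasDerivAt_radialPotential (hg : Continuous g) :
    HasDerivAt (radialPotential n g) (s * radialMean n g s) s := by
  simpa [funext fun t ↦ radialPotential.eq_1 n g t, one_add_one_eq_two] using
    hasDerivAt_pow_succ_mul_radialMean (n := 1) (continuous_radialMean (n := n) hg)

lemma radialPotential_sub (hf : Continuous f) (hg : Continuous g) :
    radialPotential n (fun x ↦ f x - g x) s = radialPotential n f s - radialPotential n g s := by
  have hmean : radialMean n (fun x ↦ f x - g x) = fun t ↦ radialMean n f t - radialMean n g t :=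
    funext fun _ ↦ radialMean_sub hf hg
  rw [radialPotential, hmean,
    radialMean_sub (continuous_radialMean hf) (continuous_radialMean hg), mul_sub]
  rfl

lemma mul_sq_div_le_radialPotential (hg : Continuous g) {a : ℝ} (h : ∀ x, a ≤ g x) :
    a * s ^ 2 / (2 * (n + 1)) ≤ radialPotential n g s := by
  have hmean : a / (n + 1) / ((1 : ℕ) + 1) ≤ radialMean 1 (radialMean n g) s :=
    div_le_radialMean (continuous_radialMean hg) fun _ ↦ div_le_radialMean hg h
  calc a * s ^ 2 / (2 * (n + 1)) = s ^ 2 * (a / (n + 1) / ((1 : ℕ) + 1)) := by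
        push_cast
        field
    _ ≤ radialPotential n g s := mul_le_mul_of_nonneg_left hmean (sq_nonneg s)

lemma sq_mul_radialMean_one_exp {l : ℝ} (hl : l ≠ 0) :
    s ^ 2 * radialMean 1 (fun t ↦ Real.exp (l * t ^ 2)) s
      = (Real.exp (l * s ^ 2) - 1) / (2 * l) := by
  rw [← one_add_one_eq_two, pow_succ_mul_radialMean, one_add_one_eq_two]
  have hderiv (x : ℝ) :
      HasDerivAt (fun t ↦ Real.exp (l * t ^ 2) / (2 * l)) (x ^ 1 * Real.exp (l * x ^ 2)) x := by
    refine (((hasDerivAt_pow 2 x).const_mul l).exp.div_const (2 * l)).congr_deriv ?_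
    push_cast
    field
  rw [intervalIntegral.integral_eq_sub_of_hasDerivAt (fun x _ ↦ hderiv x)
    (Continuous.intervalIntegrable (by fun_prop) _ _)]
  simp [sub_div]

lemma abs_radialPotential_le {l C : ℝ} (hl : 0 < l)
    (h : ∀ x, |g x| ≤ C * Real.exp (l * x ^ 2)) :
    |radialPotential n g s| ≤ C / (2 * l) * Real.exp (l * s ^ 2) := by
  have hC : 0 ≤ C := by simpa using (abs_nonneg _).trans (h 0)
  have hmean (t : ℝ) : |radialMean n g t| ≤ C * Real.exp (l * t ^ 2) := by
    refine abs_radialMean_le fun τ hτ ↦ (h (t * τ)).trans ?_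
    have hsq : (t * τ) ^ 2 ≤ t ^ 2 := by
      rw [mul_pow]
      exact mul_le_of_le_one_right (sq_nonneg t) (pow_le_one₀ hτ.1 hτ.2)
    gcongr
  calc |radialPotential n g s| = s ^ 2 * |radialMean 1 (radialMean n g) s| := by
        rw [radialPotential, abs_mul, abs_of_nonneg (sq_nonneg s)]
    _ ≤ s ^ 2 * radialMean 1 (fun t ↦ C * Real.exp (l * t ^ 2)) s := by
        gcongr
        exact abs_radialMean_le_radialMean (by fun_prop) fun τ _ ↦ hmean (s * τ)
    _ = C / (2 * l) * (Real.exp (l * s ^ 2) - 1) := by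
        rw [radialMean_const_mul, mul_left_comm, sq_mul_radialMean_one_exp hl.ne']
        ring
    _ ≤ C / (2 * l) * Real.exp (l * s ^ 2) := by
        gcongr
        linarith

end RadialPotential

/-! ### Existence of radial solutions -/

/-- `u` solves `u'' + (n/s) u' = F(u)`, `u'(0) = 0`, integrated once so that the equation is
regular at `s = 0`. The solution is considered on all of `ℝ`, where it is an even function. -/
def IsRadialSol (n : ℕ) (F u : ℝ → ℝ) : Prop :=
  ∀ s, HasDerivAt u (s * radialMean n (F ∘ u) s) s

section Existence

variable {n : ℕ} {F : ℝ → ℝ} {K : ℝ≥0}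

lemma isRadialSol_of_eq_add_radialPotential {u : ℝ → ℝ} {η : ℝ} (hF : Continuous F)
    (hu : Continuous u) (h : ∀ s, u s = η + radialPotential n (F ∘ u) s) : IsRadialSol n F u := by
  intro s
  rw [show HasDerivAt u = HasDerivAt fun s ↦ η + radialPotential n (F ∘ u) s from
    congrArg _ (funext h)]
  exact (hasDerivAt_radialPotential (hF.comp hu)).const_add η

/-- The Picard map for `u = η + radialPotential n (F ∘ u)`, written in the unknown
`v(s) = exp (-(K + 1) s²) u(s)`. -/
def picardFun (n : ℕ) (K : ℝ≥0) (F : ℝ → ℝ) (η : ℝ) (v : ℝ → ℝ) (s : ℝ) : ℝ :=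
  Real.exp (-((K + 1) * s ^ 2)) *
    (η + radialPotential n (fun x ↦ F (Real.exp ((K + 1) * x ^ 2) * v x)) s)

lemma continuous_picardFun (hF : Continuous F) (η : ℝ) {v : ℝ → ℝ} (hv : Continuous v) :
    Continuous (picardFun n K F η v) := by
  have hpot : Continuous
      (radialPotential n fun x ↦ F (Real.exp ((K + 1) * x ^ 2) * v x)) :=
    continuous_radialPotential (by fun_prop)
  unfold picardFun
  fun_prop

lemma abs_picardFun_le (hF : LipschitzWith K F) (η : ℝ) (v : ℝ →ᵇ ℝ) (s : ℝ) :
    |picardFun n K F η v s| ≤ |η| + (|F 0| + K * ‖v‖) / (2 * (K + 1)) := by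
  have hforce (x : ℝ) : |F (Real.exp ((K + 1) * x ^ 2) * v x)|
      ≤ (|F 0| + K * ‖v‖) * Real.exp ((K + 1) * x ^ 2) := by
    have hexp : 1 ≤ Real.exp ((K + 1) * x ^ 2) := Real.one_le_exp (by positivity)
    have hlip := hF.dist_le_mul (Real.exp ((K + 1) * x ^ 2) * v x) 0
    rw [Real.dist_eq, Real.dist_eq, sub_zero, abs_mul, Real.abs_exp] at hlip
    calc |F (Real.exp ((K + 1) * x ^ 2) * v x)|
        ≤ |F 0| + |F (Real.exp ((K + 1) * x ^ 2) * v x) - F 0| := by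
          linarith [abs_sub_abs_le_abs_sub (F (Real.exp ((K + 1) * x ^ 2) * v x)) (F 0)]
      _ ≤ |F 0| * Real.exp ((K + 1) * x ^ 2) + K * (Real.exp ((K + 1) * x ^ 2) * ‖v‖) :=
          add_le_add (le_mul_of_one_le_right (abs_nonneg _) hexp)
            (hlip.trans (by gcongr; exact v.norm_coe_le_norm x))
      _ = (|F 0| + K * ‖v‖) * Real.exp ((K + 1) * x ^ 2) := by ring
  have hpot := abs_radialPotential_le (n := n) (s := s) (by positivity) hforce
  have hdecay : Real.exp (-((K + 1) * s ^ 2)) ≤ 1 :=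
    Real.exp_le_one_iff.2 (neg_nonpos.2 (by positivity))
  calc |picardFun n K F η v s|
      ≤ Real.exp (-((K + 1) * s ^ 2)) * (|η| +
          (|F 0| + K * ‖v‖) / (2 * (K + 1)) * Real.exp ((K + 1) * s ^ 2)) := by
        rw [picardFun, abs_mul, Real.abs_exp]
        gcongr
        exact (abs_add_le _ _).trans (by gcongr)
    _ = Real.exp (-((K + 1) * s ^ 2)) * |η| + (|F 0| + K * ‖v‖) / (2 * (K + 1)) := by
        rw [Real.exp_neg]
        field
    _ ≤ |η| + (|F 0| + K * ‖v‖) / (2 * (K + 1)) := by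
        gcongr
        exact mul_le_of_le_one_left (abs_nonneg η) hdecay

/-- `picardFun` as a self-map of the bounded continuous functions. -/
def picardMap (n : ℕ) (hF : LipschitzWith K F) (η : ℝ) (v : ℝ →ᵇ ℝ) : ℝ →ᵇ ℝ :=
  .ofNormedAddCommGroup (picardFun n K F η v) (continuous_picardFun hF.continuous η v.continuous)
    _ (abs_picardFun_le hF η v)

lemma dist_picardMap_le (hF : LipschitzWith K F) (η : ℝ) (v w : ℝ →ᵇ ℝ) :
    dist (picardMap n hF η v) (picardMap n hF η w) ≤ (1 / 2 : ℝ≥0) * dist v w := by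
  have hFc := hF.continuous
  refine (BoundedContinuousFunction.dist_le (by positivity)).2 fun s ↦ ?_
  change dist (picardFun n K F η v s) (picardFun n K F η w s) ≤ _
  have hforce (x : ℝ) :
      |F (Real.exp ((K + 1) * x ^ 2) * v x) - F (Real.exp ((K + 1) * x ^ 2) * w x)|
        ≤ K * dist v w * Real.exp ((K + 1) * x ^ 2) := by
    refine (hF.dist_le_mul _ _).trans ?_
    rw [Real.dist_eq, ← mul_sub, abs_mul, Real.abs_exp, mul_assoc, mul_comm (dist v w),
      ← Real.dist_eq]
    gcongr
    exact v.dist_coe_le_dist x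
  have hpot := abs_radialPotential_le (n := n) (s := s) (by positivity) hforce
  rw [radialPotential_sub (by fun_prop) (by fun_prop)] at hpot
  calc dist (picardFun n K F η v s) (picardFun n K F η w s)
      ≤ Real.exp (-((K + 1) * s ^ 2)) *
          (K * dist v w / (2 * (K + 1)) * Real.exp ((K + 1) * s ^ 2)) := by
        rw [picardFun, picardFun, Real.dist_eq, ← mul_sub, abs_mul, Real.abs_exp,
          add_sub_add_left_eq_sub]
        gcongr
    _ = K / (K + 1) * (1 / 2 * dist v w) := by
        rw [Real.exp_neg]
        field
    _ ≤ (1 / 2 : ℝ≥0) * dist v w := by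
        push_cast
        exact mul_le_of_le_one_left (by positivity) (div_le_one_of_le₀ (by simp) (by positivity))

lemma contractingWith_picardMap (hF : LipschitzWith K F) (η : ℝ) :
    ContractingWith (1 / 2) (picardMap n hF η) :=
  ⟨by norm_num, LipschitzWith.of_dist_le_mul (dist_picardMap_le hF η)⟩

lemma dist_picardMap_initial_le (hF : LipschitzWith K F) (η η' : ℝ) (v : ℝ →ᵇ ℝ) :
    dist (picardMap n hF η v) (picardMap n hF η' v) ≤ dist η η' := by
  refine (BoundedContinuousFunction.dist_le dist_nonneg).2 fun s ↦ ?_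
  change dist (picardFun n K F η v s) (picardFun n K F η' v s) ≤ _
  rw [picardFun, picardFun, Real.dist_eq, ← mul_sub, abs_mul, Real.abs_exp,
    add_sub_add_right_eq_sub, Real.dist_eq]
  exact mul_le_of_le_one_left (abs_nonneg _) (Real.exp_le_one_iff.2 (neg_nonpos.2 (by positivity)))

theorem exists_continuous_family_isRadialSol (n : ℕ) (hF : LipschitzWith K F) :
    ∃ u : ℝ → ℝ → ℝ, Continuous ↿u ∧ ∀ η, u η 0 = η ∧ IsRadialSol n F (u η) := by
  let v (η : ℝ) : ℝ →ᵇ ℝ := (contractingWith_picardMap (n := n) hF η).fixedPoint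
  have hv_cont : Continuous v := by
    refine (LipschitzWith.of_dist_le_mul (K := 2) fun η η' ↦ ?_).continuous
    refine ((contractingWith_picardMap hF η).fixedPoint_lipschitz_in_map
      (contractingWith_picardMap hF η') (dist_picardMap_initial_le hF η η')).trans_eq ?_
    push_cast
    ring
  have hv_eval : Continuous fun q : ℝ × ℝ ↦ v q.1 q.2 :=
    ContinuousEval.continuous_eval.comp (hv_cont.prodMap continuous_id)
  let u (η s : ℝ) : ℝ := Real.exp ((K + 1) * s ^ 2) * v η s
  have hu_eq (η s : ℝ) : u η s = η + radialPotential n (F ∘ u η) s := by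
    have hfix : picardFun n K F η (v η) s = v η s :=
      DFunLike.congr_fun (contractingWith_picardMap (n := n) hF η).fixedPoint_isFixedPt s
    rw [show u η s = Real.exp ((K + 1) * s ^ 2) * v η s from rfl, ← hfix, picardFun, ← mul_assoc,
      ← Real.exp_add, add_neg_cancel, Real.exp_zero, one_mul]
    rfl
  refine ⟨u, (by fun_prop : Continuous fun q : ℝ × ℝ ↦ u q.1 q.2), fun η ↦ ⟨?_, ?_⟩⟩
  · rw [hu_eq, radialPotential_zero_right, add_zero]
  · exact isRadialSol_of_eq_add_radialPotential hF.continuous (by fun_prop) (hu_eq η)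

end Existence

/-! ### Properties of radial solutions -/

lemma radialMean_comp_rescale {n : ℕ} {F F' u : ℝ → ℝ} {a l s : ℝ}
    (h : ∀ s, F' (a * u s) = a * l ^ 2 * F (u s)) :
    radialMean n (F' ∘ fun s ↦ a * u (l * s)) s = a * l ^ 2 * radialMean n (F ∘ u) (l * s) := by
  rw [← radialMean_const_mul, ← radialMean_comp_mul_left]
  exact radialMean_congr fun τ _ ↦ h _

namespace IsRadialSol

variable {n : ℕ} {F u : ℝ → ℝ} {s : ℝ}

protected lemma continuous (hu : IsRadialSol n F u) : Continuous u :=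
  continuous_iff_continuousAt.2 fun s ↦ (hu s).continuousAt

lemma comp_neg (hu : IsRadialSol n F u) : IsRadialSol n F fun s ↦ u (-s) := by
  intro s
  refine ((hu (-s)).comp s (hasDerivAt_neg s)).congr_deriv ?_
  simp only [radialMean, Function.comp_apply, neg_mul, mul_neg, mul_one, neg_neg]

lemma eq_add_radialPotential (hu : IsRadialSol n F u) (hF : Continuous F) :
    u s = u 0 + radialPotential n (F ∘ u) s := by
  have hderiv (t : ℝ) : HasDerivAt (fun t ↦ u t - radialPotential n (F ∘ u) t) 0 t :=
    ((hu t).sub (hasDerivAt_radialPotential (hF.comp hu.continuous))).congr_deriv (sub_self _)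
  have hconst := is_const_of_deriv_eq_zero (fun t ↦ (hderiv t).differentiableAt)
    (fun t ↦ (hderiv t).deriv) s 0
  simp only [radialPotential_zero_right] at hconst
  linarith

lemma add_mul_sq_div_le (hu : IsRadialSol n F u) (hF : Continuous F) {a : ℝ}
    (ha : ∀ x, a ≤ F x) : u 0 + a * s ^ 2 / (2 * (n + 1)) ≤ u s := by
  rw [hu.eq_add_radialPotential hF (s := s)]
  gcongr
  exact mul_sq_div_le_radialPotential (hF.comp hu.continuous) fun x ↦ ha (u x)

lemma lt_of_add_mul_sq_lt (hu : IsRadialSol n F u) (hF : Continuous F) {a c L : ℝ}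
    (ha0 : 0 ≤ a) (ha : ∀ x, -a ≤ F x) (h0 : c + a * L ^ 2 < u 0) (hs : s ∈ Icc 0 L) : c < u s := by
  have hs0 : 0 ≤ s := hs.1
  calc c < u 0 - a * L ^ 2 := lt_sub_iff_add_lt.2 h0
    _ ≤ u 0 - a * s ^ 2 / (2 * (n + 1)) := by
        gcongr
        refine (div_le_self (by positivity) (by linarith [n.cast_nonneg (α := ℝ)])).trans ?_
        gcongr
        exact hs.2
    _ = u 0 + -a * s ^ 2 / (2 * (n + 1)) := by ring
    _ ≤ u s := hu.add_mul_sq_div_le hF ha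

-- Friction makes the energy `(u')² / 2 + G(u)` nonincreasing away from the origin.
lemma potential_le_of_nonneg (hu : IsRadialSol n F u) (hF : Continuous F) {G : ℝ → ℝ}
    (hG : ∀ x, HasDerivAt G (-F x) x) (hs : 0 ≤ s) : G (u s) ≤ G (u 0) := by
  set m := radialMean n (F ∘ u)
  let energy (t : ℝ) : ℝ := (t * m t) ^ 2 / 2 + G (u t)
  have hderiv (t : ℝ) : HasDerivAt energy (-(n * t * m t ^ 2)) t := by
    refine ((((hasDerivAt_id_mul_radialMean (hF.comp hu.continuous)).pow 2).div_const 2).add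
      ((hG (u t)).comp t (hu t))).congr_deriv ?_
    simp only [m, Function.comp_apply]
    push_cast
    ring
  have hanti : AntitoneOn energy (Ici 0) := by
    refine antitoneOn_of_deriv_nonpos (convex_Ici 0)
      (fun t _ ↦ (hderiv t).continuousAt.continuousWithinAt)
      (fun t _ ↦ (hderiv t).differentiableAt.differentiableWithinAt) fun t ht ↦ ?_
    rw [interior_Ici, mem_Ioi] at ht
    rw [(hderiv t).deriv, neg_nonpos]
    positivity
  calc G (u s) ≤ energy s := le_add_of_nonneg_left (by positivity)
    _ ≤ energy 0 := hanti self_mem_Ici hs hs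
    _ = G (u 0) := by simp [energy]

lemma potential_le (hu : IsRadialSol n F u) (hF : Continuous F) {G : ℝ → ℝ}
    (hG : ∀ x, HasDerivAt G (-F x) x) (s : ℝ) : G (u s) ≤ G (u 0) := by
  rcases le_total 0 s with hs | hs
  · exact hu.potential_le_of_nonneg hF hG hs
  · simpa using hu.comp_neg.potential_le_of_nonneg hF hG (neg_nonneg.2 hs)

lemma deriv_eq (hu : IsRadialSol n F u) : deriv u = fun s ↦ s * radialMean n (F ∘ u) s :=
  funext fun s ↦ (hu s).deriv

lemma deriv_deriv_add (hu : IsRadialSol n F u) (hFu : Continuous (F ∘ u)) (hs : s ≠ 0) :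
    deriv (deriv u) s + n / s * deriv u s = F (u s) := by
  simp only [hu.deriv_eq, (hasDerivAt_id_mul_radialMean hFu).deriv, Function.comp_apply]
  field

lemma contDiff_two (hu : IsRadialSol n F u) (hFu : Continuous (F ∘ u)) : ContDiff ℝ 2 u := by
  rw [← one_add_one_eq_two, contDiff_succ_iff_deriv, hu.deriv_eq, contDiff_one_iff_deriv]
  refine ⟨fun s ↦ (hu s).differentiableAt, by simp,
    fun s ↦ (hasDerivAt_id_mul_radialMean hFu).differentiableAt, ?_⟩
  rw [funext fun s ↦ (hasDerivAt_id_mul_radialMean (n := n) (s := s) hFu).deriv]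
  exact hFu.sub (continuous_const.mul (continuous_radialMean hFu))

lemma const_mul_comp_mul {F' : ℝ → ℝ} (hu : IsRadialSol n F u) {a l : ℝ}
    (h : ∀ s, F' (a * u s) = a * l ^ 2 * F (u s)) : IsRadialSol n F' fun s ↦ a * u (l * s) := by
  intro s
  refine (((hu (l * s)).comp s ((hasDerivAt_id s).const_mul l)).const_mul a).congr_deriv ?_
  rw [radialMean_comp_rescale h]
  ring

lemma congr_force {F' : ℝ → ℝ} (hu : IsRadialSol n F u) (h : F ∘ u = F' ∘ u) :
    IsRadialSol n F' u := by
  rwa [IsRadialSol, ← h]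

end IsRadialSol

/-! ### The phase plane -/

/-- The phase curve `(u - c, u')` of a radial solution `u`, centred at `c`, as a complex number. -/
def radialPhase (n : ℕ) (F : ℝ → ℝ) (c : ℝ) (u : ℝ → ℝ) (s : ℝ) : ℂ :=
  (u s - c : ℝ) + (s * radialMean n (F ∘ u) s : ℝ) * Complex.I

/-- The Prüfer angle of a radial solution: the total angle by which its phase curve turns around
the origin on `[0, s]`. -/
def radialPhaseAngle (n : ℕ) (F : ℝ → ℝ) (c : ℝ) (u : ℝ → ℝ) (s : ℝ) : ℝ :=
  (∫ t in (0 : ℝ)..s, logDeriv (radialPhase n F c u) t).im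

lemma eq_mul_exp_integral_logDeriv {Z : ℝ → ℂ} (hZ : Differentiable ℝ Z)
    (hcont : Continuous (logDeriv Z)) (hne : ∀ s, Z s ≠ 0) (s : ℝ) :
    Z s = Z 0 * Complex.exp (∫ t in (0 : ℝ)..s, logDeriv Z t) := by
  let P (s : ℝ) : ℂ := ∫ t in (0 : ℝ)..s, logDeriv Z t
  have hP (t : ℝ) : HasDerivAt P (logDeriv Z t) t :=
    intervalIntegral.integral_hasDerivAt_right (hcont.intervalIntegrable _ _)
      (hcont.stronglyMeasurableAtFilter _ _) hcont.continuousAt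
  have hderiv (t : ℝ) : HasDerivAt (fun t ↦ Z t * Complex.exp (-P t)) 0 t := by
    refine ((hZ t).hasDerivAt.mul (hP t).neg.cexp).congr_deriv ?_
    rw [logDeriv_apply]
    field [hne t]
  have hconst : Z s * Complex.exp (-P s) = Z 0 := by
    simpa [P] using is_const_of_deriv_eq_zero (fun t ↦ (hderiv t).differentiableAt)
      (fun t ↦ (hderiv t).deriv) s 0
  rw [← hconst, mul_assoc, ← Complex.exp_add, neg_add_cancel, Complex.exp_zero, mul_one]

section Phase

variable {n : ℕ} {F u : ℝ → ℝ} {c s : ℝ}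

@[simp]
lemma radialPhase_re : (radialPhase n F c u s).re = u s - c := by simp [radialPhase]

@[simp]
lemma radialPhase_im : (radialPhase n F c u s).im = s * radialMean n (F ∘ u) s := by
  simp [radialPhase]

lemma radialPhase_zero : radialPhase n F c u 0 = (u 0 - c : ℝ) := by simp [radialPhase]

lemma radialPhaseAngle_zero : radialPhaseAngle n F c u 0 = 0 := by simp [radialPhaseAngle]

end Phase

namespace IsRadialSol

section Phase

variable {n : ℕ} {F u : ℝ → ℝ} {c s : ℝ} {K : ℝ≥0}

lemma hasDerivAt_radialPhase (hu : IsRadialSol n F u) (hF : Continuous F) :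
    HasDerivAt (radialPhase n F c u) ((s * radialMean n (F ∘ u) s : ℝ) +
      (F (u s) - n * radialMean n (F ∘ u) s : ℝ) * Complex.I) s :=
  ((hu s).sub_const c).ofReal_comp.add
    ((hasDerivAt_id_mul_radialMean (hF.comp hu.continuous)).ofReal_comp.mul_const Complex.I)

lemma norm_deriv_radialPhase_le (hu : IsRadialSol n F u) (hF : LipschitzWith K F) (hc : F c = 0)
    {ε : ℝ} (hε : 0 < ε) (hs : ε ≤ |s|) :
    ‖deriv (radialPhase n F c u) s‖ ≤ (1 + K + n / ε) * ‖radialPhase n F c u s‖ := by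
  rw [(hu.hasDerivAt_radialPhase hF.continuous).deriv]
  set m := radialMean n (F ∘ u) s
  set z := radialPhase n F c u s
  have hforce : |F (u s)| ≤ K * |u s - c| := by
    simpa [hc, Real.dist_eq] using hF.dist_le_mul (u s) c
  have hmean : |m| ≤ |s * m| / ε := by
    rw [le_div_iff₀' hε, abs_mul]
    gcongr
  have hre : |u s - c| ≤ ‖z‖ := by simpa [z] using Complex.abs_re_le_norm z
  have him : |s * m| ≤ ‖z‖ := by simpa [z, m] using Complex.abs_im_le_norm z
  calc ‖((s * m : ℝ) + (F (u s) - n * m : ℝ) * Complex.I : ℂ)‖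
      ≤ |s * m| + |F (u s) - n * m| := by
        simpa using Complex.norm_le_abs_re_add_abs_im
          ((s * m : ℝ) + (F (u s) - n * m : ℝ) * Complex.I)
    _ ≤ |s * m| + (|F (u s)| + n * |m|) := by
        gcongr
        exact (abs_sub _ _).trans_eq (by simp [abs_mul])
    _ ≤ ‖z‖ + (K * ‖z‖ + n * (‖z‖ / ε)) := by
        gcongr
        · exact hforce.trans (by gcongr)
        · exact hmean.trans (by gcongr)
    _ = (1 + K + n / ε) * ‖z‖ := by ring

lemma radialPhase_ne_zero_of_neg (hu : IsRadialSol n F u) (hF : LipschitzWith K F) (hc : F c = 0)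
    (h0 : u 0 ≠ c) (hs : s < 0) : radialPhase n F c u s ≠ 0 := by
  intro hz
  have hderiv (t : ℝ) : HasDerivAt (radialPhase n F c u) (deriv (radialPhase n F c u) t) t :=
    (hu.hasDerivAt_radialPhase hF.continuous).differentiableAt.hasDerivAt
  have hvanish : ∀ t ∈ Ioo s 0, u t = c := by
    intro t ht
    have hzt := eq_zero_of_abs_deriv_le_mul_abs_self_of_eq_zero_right
      (fun x _ ↦ (hderiv x).continuousAt.continuousWithinAt)
      (fun x _ ↦ (hderiv x).hasDerivWithinAt) hz
      (fun x hx ↦ hu.norm_deriv_radialPhase_le hF hc (neg_pos.2 ht.2)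
        ((neg_le_neg hx.2.le).trans (neg_le_abs x))) t ⟨ht.1.le, le_rfl⟩
    simpa [sub_eq_zero] using congrArg Complex.re hzt
  refine h0 (tendsto_nhds_unique_of_eventuallyEq
    (hu.continuous.continuousAt.tendsto.mono_left nhdsWithin_le_nhds) tendsto_const_nhds
    (l := 𝓝[<] 0) ?_)
  filter_upwards [Ioo_mem_nhdsLT hs] using hvanish

lemma radialPhase_ne_zero (hu : IsRadialSol n F u) (hF : LipschitzWith K F) (hc : F c = 0)
    (h0 : u 0 ≠ c) (s : ℝ) : radialPhase n F c u s ≠ 0 := by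
  rcases lt_trichotomy s 0 with hs | rfl | hs
  · exact hu.radialPhase_ne_zero_of_neg hF hc h0 hs
  · rw [radialPhase_zero]
    exact_mod_cast sub_ne_zero.2 h0
  · have hreflect := hu.comp_neg.radialPhase_ne_zero_of_neg hF hc (by simpa using h0)
      (neg_lt_zero.2 hs)
    contrapose! hreflect
    simp only [Complex.ext_iff, radialPhase_re, radialPhase_im, Complex.zero_re, Complex.zero_im]
      at hreflect ⊢
    simpa [radialMean, Function.comp_def] using hreflect

end Phase

end IsRadialSol

/-! ### The Prüfer angle -/

section PruferAngleFamily

variable {X : Type*} [TopologicalSpace X] {n : ℕ} {F : ℝ → ℝ} {c : ℝ} {u : X → ℝ → ℝ}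

lemma continuous_logDeriv_radialPhase (hF : Continuous F) (hu : Continuous ↿u)
    (hsol : ∀ x, IsRadialSol n F (u x)) (hne : ∀ x s, radialPhase n F c (u x) s ≠ 0) :
    Continuous fun q : X × ℝ ↦ logDeriv (radialPhase n F c (u q.1)) q.2 := by
  have hmean : Continuous fun q : X × ℝ ↦ radialMean n (F ∘ u q.1) q.2 :=
    continuous_radialMean_param (g := fun q : X × ℝ ↦ F ∘ u q.1)
      (hF.comp (hu.comp (continuous_fst.fst.prodMk continuous_snd))) continuous_snd
  have hval : Continuous fun q : X × ℝ ↦ u q.1 q.2 := hu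
  simp only [logDeriv_apply, ((hsol _).hasDerivAt_radialPhase hF).deriv]
  refine Continuous.div ?_ ?_ fun q ↦ hne q.1 q.2
  · fun_prop
  · simp only [radialPhase]
    fun_prop

lemma continuous_radialPhaseAngle (hF : Continuous F) (hu : Continuous ↿u)
    (hsol : ∀ x, IsRadialSol n F (u x)) (hne : ∀ x s, radialPhase n F c (u x) s ≠ 0) (L : ℝ) :
    Continuous fun x ↦ radialPhaseAngle n F c (u x) L :=
  Complex.continuous_im.comp <|
    intervalIntegral.continuous_parametric_intervalIntegral_of_continuous'
      (continuous_logDeriv_radialPhase hF hu hsol hne) 0 L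

end PruferAngleFamily

namespace IsRadialSol

section PruferAngle

variable {n : ℕ} {F u : ℝ → ℝ} {c s L κ : ℝ}

lemma im_logDeriv_radialPhase (hu : IsRadialSol n F u) (hF : Continuous F) :
    (logDeriv (radialPhase n F c u) s).im =
      ((u s - c) * (F (u s) - n * radialMean n (F ∘ u) s) - (s * radialMean n (F ∘ u) s) ^ 2) /
        ((u s - c) ^ 2 + (s * radialMean n (F ∘ u) s) ^ 2) := by
  rw [logDeriv_apply, (hu.hasDerivAt_radialPhase hF).deriv, Complex.div_im, ← sub_div,
    Complex.normSq_apply, radialPhase_re, radialPhase_im, ← sq, ← sq]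
  simp only [Complex.ofReal_mul, Complex.ofReal_sub, Complex.ofReal_natCast, Complex.add_im,
    Complex.mul_im, Complex.ofReal_re, Complex.ofReal_im, mul_zero, zero_mul, add_zero,
    Complex.sub_re, Complex.mul_re, Complex.natCast_re, Complex.natCast_im, sub_zero, Complex.I_im,
    mul_one, Complex.sub_im, sub_self, Complex.I_re, zero_add, Complex.add_re]
  ring

lemma continuous_logDeriv_radialPhase (hu : IsRadialSol n F u) (hF : Continuous F)
    (hne : ∀ s, radialPhase n F c u s ≠ 0) : Continuous (logDeriv (radialPhase n F c u)) :=
  (_root_.continuous_logDeriv_radialPhase (X := Unit) hF (hu.continuous.comp continuous_snd)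
    (fun _ ↦ hu) fun _ ↦ hne).comp ((continuous_const (y := ())).prodMk continuous_id)

lemma hasDerivAt_radialPhaseAngle (hu : IsRadialSol n F u) (hF : Continuous F)
    (hne : ∀ s, radialPhase n F c u s ≠ 0) (s : ℝ) :
    HasDerivAt (radialPhaseAngle n F c u) (logDeriv (radialPhase n F c u) s).im s := by
  have hcont := hu.continuous_logDeriv_radialPhase hF hne
  exact Complex.imCLM.hasFDerivAt.comp_hasDerivAt s <|
    intervalIntegral.integral_hasDerivAt_right (hcont.intervalIntegrable _ _)
      (hcont.stronglyMeasurableAtFilter _ _) hcont.continuousAt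

lemma exists_radialPhase_polar (hu : IsRadialSol n F u) (hF : Continuous F)
    (hne : ∀ s, radialPhase n F c u s ≠ 0) (s : ℝ) :
    ∃ ρ > 0, u s - c = (u 0 - c) * (ρ * Real.cos (radialPhaseAngle n F c u s)) ∧
      s * radialMean n (F ∘ u) s =
        (u 0 - c) * (ρ * Real.sin (radialPhaseAngle n F c u s)) := by
  have hexp := eq_mul_exp_integral_logDeriv
    (fun t ↦ (hu.hasDerivAt_radialPhase (c := c) (s := t) hF).differentiableAt)
    (hu.continuous_logDeriv_radialPhase hF hne) hne s
  rw [radialPhase_zero] at hexp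
  refine ⟨Real.exp (∫ t in (0 : ℝ)..s, logDeriv (radialPhase n F c u) t).re, Real.exp_pos _,
    ?_, ?_⟩
  · simpa [Complex.exp_re, radialPhaseAngle] using congrArg Complex.re hexp
  · simpa [Complex.exp_im, radialPhaseAngle] using congrArg Complex.im hexp

lemma im_logDeriv_radialPhase_neg (hu : IsRadialSol n F u) (hF : Continuous F)
    (hsign : (u s - c) * F (u s) < 0) (hs : s * radialMean n (F ∘ u) s = 0) :
    (logDeriv (radialPhase n F c u) s).im < 0 := by
  have hw : u s - c ≠ 0 := left_ne_zero_of_mul hsign.ne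
  rw [hu.im_logDeriv_radialPhase hF, hs]
  refine div_neg_of_neg_of_pos ?_ (by positivity)
  rcases mul_eq_zero.1 hs with rfl | hm
  · rw [radialMean_zero_right, Function.comp_apply]
    calc (u 0 - c) * (F (u 0) - n * (F (u 0) / (n + 1))) - 0 ^ 2
        = (u 0 - c) * F (u 0) / (n + 1) := by field
      _ < 0 := div_neg_of_neg_of_pos hsign (by positivity)
  · simpa [hm] using hsign

lemma radialPhaseAngle_nonpos (hu : IsRadialSol n F u) (hF : Continuous F)
    (hne : ∀ s, radialPhase n F c u s ≠ 0) (hsign : ∀ x ≠ c, (x - c) * F x < 0) (hs : 0 ≤ s) :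
    radialPhaseAngle n F c u s ≤ 0 := by
  have hderiv := hu.hasDerivAt_radialPhaseAngle hF hne
  refine image_le_of_deriv_right_lt_deriv_boundary' (a := 0) (B := fun _ ↦ 0) (B' := fun _ ↦ 0)
    (fun t _ ↦ (hderiv t).continuousAt.continuousWithinAt)
    (fun t _ ↦ (hderiv t).hasDerivWithinAt) radialPhaseAngle_zero.le continuousOn_const
    (fun _ _ ↦ hasDerivWithinAt_const _ _ _) (fun t _ hangle ↦ ?_) ⟨hs, le_rfl⟩
  obtain ⟨ρ, -, -, him⟩ := hu.exists_radialPhase_polar hF hne t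
  have hvel : t * radialMean n (F ∘ u) t = 0 := by simpa [hangle] using him
  refine hu.im_logDeriv_radialPhase_neg hF (hsign _ fun hc ↦ hne t ?_) hvel
  simp [Complex.ext_iff, hc, hvel]

lemma im_logDeriv_radialPhase_le (hu : IsRadialSol n F u) (hF : Continuous F)
    (hne : radialPhase n F c u s ≠ 0) (hκ : 0 < κ) (hκ1 : κ ≤ 1) (hn : n ≤ κ * s)
    (hforce : (u s - c) * F (u s) ≤ -κ * (u s - c) ^ 2) :
    (logDeriv (radialPhase n F c u) s).im ≤ -(κ / 2) := by
  rw [hu.im_logDeriv_radialPhase hF]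
  set m := radialMean n (F ∘ u) s
  set w := u s - c
  have hnorm : 0 < w ^ 2 + (s * m) ^ 2 := by
    have := Complex.normSq_pos.2 hne
    rwa [Complex.normSq_apply, radialPhase_re, radialPhase_im, ← sq, ← sq] at this
  have hfriction : -(n * (w * m)) ≤ κ / 2 * (w ^ 2 + (s * m) ^ 2) := by
    have hs : 0 ≤ s := nonneg_of_mul_nonneg_right (n.cast_nonneg.trans hn) hκ
    calc -(n * (w * m)) ≤ n * |w * m| := by
          rw [← mul_neg]
          gcongr
          exact neg_le_abs _
      _ ≤ κ * s * |w * m| := by gcongr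
      _ = κ / 2 * (2 * |w| * |s * m|) := by
          rw [abs_mul, abs_mul, abs_of_nonneg hs]
          ring
      _ ≤ κ / 2 * (|w| ^ 2 + |s * m| ^ 2) := by
          gcongr
          exact two_mul_le_add_sq _ _
      _ = κ / 2 * (w ^ 2 + (s * m) ^ 2) := by rw [sq_abs, sq_abs]
  rw [div_le_iff₀ hnorm]
  nlinarith [mul_nonneg (sub_nonneg.2 hκ1) (sq_nonneg (s * m))]

lemma radialPhaseAngle_le (hu : IsRadialSol n F u) (hF : Continuous F)
    (hne : ∀ s, radialPhase n F c u s ≠ 0) (hsign : ∀ x ≠ c, (x - c) * F x < 0)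
    (hκ : 0 < κ) (hκ1 : κ ≤ 1) (hforce : ∀ s, (u s - c) * F (u s) ≤ -κ * (u s - c) ^ 2)
    (hL : n / κ ≤ L) : radialPhaseAngle n F c u L ≤ (n - κ * L) / 2 := by
  have hderiv := hu.hasDerivAt_radialPhaseAngle hF hne
  have hstart : radialPhaseAngle n F c u (n / κ) ≤ 0 :=
    hu.radialPhaseAngle_nonpos hF hne hsign (by positivity)
  have hdrop : radialPhaseAngle n F c u L - radialPhaseAngle n F c u (n / κ) ≤
      -(κ / 2) * (L - n / κ) := by
    refine (convex_Icc (n / κ) L).image_sub_le_mul_sub_of_deriv_le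
      (fun t _ ↦ (hderiv t).continuousAt.continuousWithinAt)
      (fun t _ ↦ (hderiv t).differentiableAt.differentiableWithinAt) (fun t ht ↦ ?_)
      _ (left_mem_Icc.2 hL) _ (right_mem_Icc.2 hL) hL
    have hnt : n / κ ≤ t := (interior_subset ht).1
    rw [(hderiv t).deriv]
    exact hu.im_logDeriv_radialPhase_le hF (hne t) hκ hκ1 ((div_le_iff₀' hκ).1 hnt) (hforce t)
  calc radialPhaseAngle n F c u L ≤ -(κ / 2) * (L - n / κ) := by linarith
    _ = (n - κ * L) / 2 := by field

lemma neg_pi_lt_radialPhaseAngle (hu : IsRadialSol n F u) (hF : Continuous F)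
    (hne : ∀ s, radialPhase n F c u s ≠ 0) (hL : 0 ≤ L) (hpos : ∀ s ∈ Icc 0 L, c < u s) :
    -Real.pi < radialPhaseAngle n F c u L := by
  by_contra! hangle
  have hcont : Continuous (radialPhaseAngle n F c u) :=
    continuous_iff_continuousAt.2 fun t ↦ (hu.hasDerivAt_radialPhaseAngle hF hne t).continuousAt
  obtain ⟨s, hs, hangle_s⟩ := intermediate_value_Icc' hL hcont.continuousOn
    ⟨hangle, radialPhaseAngle_zero.symm ▸ neg_nonpos.2 Real.pi_pos.le⟩
  obtain ⟨ρ, hρ, hre, -⟩ := hu.exists_radialPhase_polar hF hne s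
  rw [hangle_s, Real.cos_neg, Real.cos_pi] at hre
  nlinarith [hpos s hs, hpos 0 ⟨le_rfl, hL⟩]

end PruferAngle

end IsRadialSol

/-! ### Shooting -/

lemma exists_injective_radialMean_eq_zero {X : Type*} [TopologicalSpace X] [PreconnectedSpace X]
    {n k : ℕ} {F : ℝ → ℝ} {c L : ℝ} {u : X → ℝ → ℝ} (hF : Continuous F) (hu : Continuous ↿u)
    (hsol : ∀ x, IsRadialSol n F (u x)) (hne : ∀ x s, radialPhase n F c (u x) s ≠ 0) (hL : L ≠ 0)
    {x₀ x₁ : X} (h₀ : radialPhaseAngle n F c (u x₀) L ≤ -(k * Real.pi))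
    (h₁ : -Real.pi ≤ radialPhaseAngle n F c (u x₁) L) :
    ∃ x : Fin k → X, Function.Injective x ∧ ∀ i, radialMean n (F ∘ u (x i)) L = 0 := by
  have hangle (i : Fin k) :
      ∃ x, radialPhaseAngle n F c (u x) L = -(((i + 1 : ℕ) : ℝ) * Real.pi) := by
    have hi : ((i + 1 : ℕ) : ℝ) ≤ k := by exact_mod_cast i.2
    have hi0 : (1 : ℝ) ≤ (i + 1 : ℕ) := by simp
    refine intermediate_value_univ x₀ x₁ (continuous_radialPhaseAngle hF hu hsol hne L)
      ⟨h₀.trans (by gcongr), le_trans ?_ h₁⟩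
    rw [neg_le_neg_iff]
    exact le_mul_of_one_le_left Real.pi_pos.le hi0
  choose x hx using hangle
  refine ⟨x, fun i j hij ↦ ?_, fun i ↦ ?_⟩
  · have := hx i ▸ hij ▸ hx j
    simpa [Real.pi_ne_zero, Fin.ext_iff] using this
  · obtain ⟨ρ, -, -, him⟩ := (hsol (x i)).exists_radialPhase_polar hF (hne (x i)) L
    rw [hx i, Real.sin_neg, Real.sin_nat_mul_pi, neg_zero, mul_zero, mul_zero] at him
    exact (mul_eq_zero.1 him).resolve_left hL

lemma exists_isRadialSol_radialMean_eq_zero {n k : ℕ} {F : ℝ → ℝ} {K : ℝ≥0} {a c κ η₀ η₁ L : ℝ}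
    (hF : LipschitzWith K F) (hc : F c = 0) (hsign : ∀ x ≠ c, (x - c) * F x < 0)
    (ha : ∀ x, -a ≤ F x) (hκ : 0 < κ) (hκ1 : κ ≤ 1)
    (hforce : ∀ u, IsRadialSol n F u → u 0 = η₀ →
      ∀ s, (u s - c) * F (u s) ≤ -κ * (u s - c) ^ 2)
    (hη₀ : c < η₀) (hη : η₀ ≤ η₁) (hη₁ : c + a * L ^ 2 < η₁) (hL : 0 < L)
    (hkL : n + 2 * k * Real.pi ≤ κ * L) :
    ∃ u : Fin k → ℝ → ℝ, Function.Injective (fun i ↦ u i 0) ∧ ∀ i, u i 0 ∈ Icc η₀ η₁ ∧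
      IsRadialSol n F (u i) ∧ radialMean n (F ∘ u i) L = 0 := by
  obtain ⟨u, hu, hsol⟩ := exists_continuous_family_isRadialSol n hF
  have hne (η : Icc η₀ η₁) : ∀ s, radialPhase n F c (u η) s ≠ 0 :=
    (hsol η).2.radialPhase_ne_zero hF hc ((hsol η).1.trans_gt (hη₀.trans_le η.2.1)).ne'
  have ha0 : 0 ≤ a := by simpa [hc] using ha c
  have hturn : radialPhaseAngle n F c (u η₀) L ≤ -(k * Real.pi) := by
    have hkπ : 0 ≤ k * Real.pi := by positivity
    have hnL : n / κ ≤ L := by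
      rw [div_le_iff₀' hκ]
      linarith
    linarith [(hsol η₀).2.radialPhaseAngle_le hF.continuous (hne ⟨η₀, le_rfl, hη⟩) hsign hκ hκ1
      (hforce _ (hsol η₀).2 (hsol η₀).1) hnL]
  have hno_turn : -Real.pi < radialPhaseAngle n F c (u η₁) L := by
    refine (hsol η₁).2.neg_pi_lt_radialPhaseAngle hF.continuous (hne ⟨η₁, hη, le_rfl⟩) hL.le
      fun s hs ↦ (hsol η₁).2.lt_of_add_mul_sq_lt hF.continuous ha0 ha ?_ hs
    rwa [(hsol η₁).1]
  have : PreconnectedSpace (Icc η₀ η₁) := Subtype.preconnectedSpace isPreconnected_Icc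
  obtain ⟨η, hinj, hmean⟩ := exists_injective_radialMean_eq_zero (k := k)
    (u := fun η : Icc η₀ η₁ ↦ u η) hF.continuous
    (hu.comp (continuous_subtype_val.prodMap continuous_id)) (fun η ↦ (hsol η).2) hne hL.ne'
    (x₀ := ⟨η₀, le_rfl, hη⟩) (x₁ := ⟨η₁, hη, le_rfl⟩) hturn hno_turn.le
  refine ⟨fun i ↦ u (η i), fun i j hij ↦ hinj (Subtype.ext ?_), fun i ↦
    ⟨by simpa only [(hsol _).1] using (η i).2, (hsol _).2, hmean i⟩⟩
  simpa only [(hsol _).1] using hij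

/-! ### The truncated force -/

/-- The right-hand side `x ^ (-α) - 1` of the radial equation normalised to have its equilibrium
at `1`. -/
def normalizedForce (α x : ℝ) : ℝ := x ^ (-α) - 1

/-- `normalizedForce` frozen below `δ`, which removes the singularity at `0` and makes the force
globally Lipschitz. -/
def truncForce (α δ x : ℝ) : ℝ := normalizedForce α (max x δ)

/-- The potential of `truncForce`, normalised to vanish at the equilibrium `1`. -/
def truncPotential (α δ x : ℝ) : ℝ := ∫ t in x..1, truncForce α δ t

section TruncForce

variable {α δ x : ℝ}

lemma neg_one_le_truncForce (hδ : 0 ≤ δ) (x : ℝ) : -1 ≤ truncForce α δ x := by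
  have : 0 ≤ max x δ ^ (-α) := Real.rpow_nonneg (le_max_of_le_right hδ) _
  rw [truncForce, normalizedForce]
  linarith

lemma truncForce_one (hδ : δ ≤ 1) : truncForce α δ 1 = 0 := by
  simp [truncForce, normalizedForce, hδ]

lemma truncForce_pos (hα : 0 < α) (hδ : 0 < δ) (hδ1 : δ < 1) (hx : x < 1) :
    0 < truncForce α δ x :=
  sub_pos.2 <| Real.one_lt_rpow_of_pos_of_lt_one_of_neg (lt_max_of_lt_right hδ) (max_lt hx hδ1)
    (neg_lt_zero.2 hα)

lemma normalizedForce_neg (hα : 0 < α) (hx : 1 < x) : normalizedForce α x < 0 :=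
  sub_neg.2 <| Real.rpow_lt_one_of_one_lt_of_neg hx (neg_lt_zero.2 hα)

lemma truncForce_neg (hα : 0 < α) (hx : 1 < x) : truncForce α δ x < 0 :=
  normalizedForce_neg hα (lt_max_of_lt_left hx)

lemma sub_one_mul_truncForce_neg (hα : 0 < α) (hδ : 0 < δ) (hδ1 : δ < 1) (hx : x ≠ 1) :
    (x - 1) * truncForce α δ x < 0 := by
  rcases hx.lt_or_gt with hx | hx
  · exact mul_neg_of_neg_of_pos (sub_neg.2 hx) (truncForce_pos hα hδ hδ1 hx)
  · exact mul_neg_of_pos_of_neg (sub_pos.2 hx) (truncForce_neg hα hx)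

lemma exists_lipschitzWith_truncForce (hα : 0 ≤ α) (hδ : 0 < δ) :
    ∃ K : ℝ≥0, LipschitzWith K (truncForce α δ) := by
  have hlip : LipschitzOnWith (α * δ ^ (-α - 1)).toNNReal (normalizedForce α) (Ici δ) := by
    refine (convex_Ici δ).lipschitzOnWith_of_nnnorm_hasDerivWithin_le
      (f' := fun x ↦ -α * x ^ (-α - 1)) (fun x hx ↦ ?_) fun x hx ↦ ?_
    · exact ((Real.hasDerivAt_rpow_const (.inl (hδ.trans_le hx).ne')).sub_const 1).hasDerivWithinAt
    · have hx0 : 0 ≤ x := hδ.le.trans hx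
      rw [← NNReal.coe_le_coe, Real.coe_toNNReal _ (by positivity), coe_nnnorm, Real.norm_eq_abs,
        abs_mul, abs_neg, abs_of_nonneg hα, abs_of_nonneg (by positivity)]
      exact mul_le_mul_of_nonneg_left (Real.rpow_le_rpow_of_nonpos hδ hx (by linarith)) hα
  have hmax : LipschitzOnWith 1 (fun x ↦ max x δ) univ :=
    (LipschitzWith.id.max_const δ).lipschitzOnWith
  exact ⟨_, lipschitzOnWith_univ.1 (hlip.comp hmax fun x _ ↦ le_max_right x δ)⟩

lemma inv_sub_one_le_truncForce (hα : 1 ≤ α) (hδ : 0 < δ) (hδx : δ ≤ x) (hx : x ≤ 1) :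
    x⁻¹ - 1 ≤ truncForce α δ x := by
  rw [truncForce, max_eq_left hδx, normalizedForce, ← Real.rpow_neg_one]
  refine sub_le_sub_right ?_ 1
  exact Real.rpow_le_rpow_of_exponent_ge (hδ.trans_le hδx) hx (neg_le_neg hα)

lemma truncForce_le_inv_sub_one (hα : 1 ≤ α) (hδx : δ ≤ x) (hx : 1 ≤ x) :
    truncForce α δ x ≤ x⁻¹ - 1 := by
  rw [truncForce, max_eq_left hδx, normalizedForce, ← Real.rpow_neg_one]
  gcongr

lemma sub_one_mul_truncForce_le (hα : 1 ≤ α) (hδ : 0 < δ) (hδx : δ ≤ x) (hx : x ≤ 2) :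
    (x - 1) * truncForce α δ x ≤ -(1 / 2) * (x - 1) ^ 2 := by
  have hx0 : 0 < x := hδ.trans_le hδx
  have hinv : 1 / 2 ≤ x⁻¹ := by
    rw [one_div]
    gcongr
  calc (x - 1) * truncForce α δ x ≤ (x - 1) * (x⁻¹ - 1) := by
        rcases le_total x 1 with hx1 | hx1
        · exact mul_le_mul_of_nonpos_left (inv_sub_one_le_truncForce hα hδ hδx hx1)
            (sub_nonpos.2 hx1)
        · exact mul_le_mul_of_nonneg_left (truncForce_le_inv_sub_one hα hδx hx1)
            (sub_nonneg.2 hx1)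
    _ = -x⁻¹ * (x - 1) ^ 2 := by field
    _ ≤ -(1 / 2) * (x - 1) ^ 2 := by gcongr

lemma hasDerivAt_truncPotential (hα : 0 ≤ α) (hδ : 0 < δ) (x : ℝ) :
    HasDerivAt (truncPotential α δ) (-truncForce α δ x) x := by
  obtain ⟨K, hK⟩ := exists_lipschitzWith_truncForce hα hδ
  exact intervalIntegral.integral_hasDerivAt_left (hK.continuous.intervalIntegrable _ _)
    (hK.continuous.stronglyMeasurableAtFilter _ _) hK.continuous.continuousAt

lemma strictMonoOn_truncPotential (hα : 0 < α) (hδ : 0 < δ) :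
    StrictMonoOn (truncPotential α δ) (Ici 1) := by
  have hderiv := hasDerivAt_truncPotential hα.le hδ
  refine strictMonoOn_of_deriv_pos (convex_Ici 1)
    (fun x _ ↦ (hderiv x).continuousAt.continuousWithinAt) fun x hx ↦ ?_
  rw [interior_Ici] at hx
  rw [(hderiv x).deriv]
  exact neg_pos.2 (truncForce_neg hα hx)

lemma strictAntiOn_truncPotential (hα : 0 < α) (hδ : 0 < δ) (hδ1 : δ < 1) :
    StrictAntiOn (truncPotential α δ) (Iic 1) := by
  have hderiv := hasDerivAt_truncPotential hα.le hδ
  refine strictAntiOn_of_deriv_neg (convex_Iic 1)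
    (fun x _ ↦ (hderiv x).continuousAt.continuousWithinAt) fun x hx ↦ ?_
  rw [interior_Iic] at hx
  rw [(hderiv x).deriv]
  exact neg_neg_iff_pos.2 (truncForce_pos hα hδ hδ1 hx)

lemma truncPotential_le (hα : 0 ≤ α) (hδ : 0 < δ) (hx : 1 ≤ x) :
    truncPotential α δ x ≤ x - 1 := by
  obtain ⟨K, hK⟩ := exists_lipschitzWith_truncForce hα hδ
  rw [truncPotential, intervalIntegral.integral_symm, neg_le, neg_sub]
  calc 1 - x = ∫ _ in (1 : ℝ)..x, (-1 : ℝ) := by simp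
    _ ≤ ∫ t in (1 : ℝ)..x, truncForce α δ t :=
        intervalIntegral.integral_mono hx (by simp) (hK.continuous.intervalIntegrable _ _)
          (neg_one_le_truncForce hδ.le)

lemma neg_log_sub_one_le_truncPotential (hα : 1 ≤ α) (hδ : 0 < δ) (hδ1 : δ ≤ 1) :
    -Real.log δ - 1 ≤ truncPotential α δ δ := by
  obtain ⟨K, hK⟩ := exists_lipschitzWith_truncForce (zero_le_one.trans hα) hδ
  have hinv : IntervalIntegrable (fun t : ℝ ↦ t⁻¹) MeasureTheory.volume δ 1 :=
    intervalIntegral.intervalIntegrable_inv (fun t ht ↦ (hδ.trans_le (uIcc_of_le hδ1 ▸ ht).1).ne')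
      continuousOn_id
  calc -Real.log δ - 1 ≤ Real.log (1 / δ) - (1 - δ) := by
        rw [one_div, Real.log_inv]
        linarith
    _ = ∫ t in δ..1, (t⁻¹ - 1) := by
        rw [intervalIntegral.integral_sub hinv (by simp), integral_inv_of_pos hδ one_pos]
        simp
    _ ≤ truncPotential α δ δ :=
        intervalIntegral.integral_mono_on hδ1 (hinv.sub (by simp))
          (hK.continuous.intervalIntegrable _ _)
          fun t ht ↦ inv_sub_one_le_truncForce hα hδ ht.1 ht.2

lemma exists_truncPotential_le (hα : 1 ≤ α) {M : ℝ} (hM : 1 ≤ M) :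
    ∃ δ, 0 < δ ∧ δ < 1 ∧ truncPotential α δ M ≤ truncPotential α δ δ := by
  have hδ1 : Real.exp (-M) < 1 := Real.exp_lt_one_iff.2 (by linarith)
  refine ⟨Real.exp (-M), Real.exp_pos _, hδ1, ?_⟩
  calc truncPotential α (Real.exp (-M)) M ≤ M - 1 :=
        truncPotential_le (zero_le_one.trans hα) (Real.exp_pos _) hM
    _ = -Real.log (Real.exp (-M)) - 1 := by rw [Real.log_exp, neg_neg]
    _ ≤ _ := neg_log_sub_one_le_truncPotential hα (Real.exp_pos _) hδ1.le

end TruncForce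

lemma mem_Icc_of_le_of_strictAntiOn_of_strictMonoOn {β γ : Type*} [LinearOrder β] [Preorder γ]
    {G : β → γ} {a b c x : β} (hanti : StrictAntiOn G (Iic c)) (hmono : StrictMonoOn G (Ici c))
    (ha : a ≤ c) (hb : c ≤ b) (hab : G b ≤ G a) (hx : G x ≤ G b) : x ∈ Icc a b := by
  refine ⟨?_, ?_⟩ <;> by_contra! h
  · exact (hanti (h.le.trans ha) ha h).not_ge (hx.trans hab)
  · exact (hmono hb (hb.trans h.le) h).not_ge hx

lemma IsRadialSol.mem_Icc_of_truncForce {n : ℕ} {α δ : ℝ} {u : ℝ → ℝ}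
    (hu : IsRadialSol n (truncForce α δ) u) (hα : 0 < α) (hδ : 0 < δ) (hδ1 : δ < 1)
    (h0 : 1 ≤ u 0) (hpot : truncPotential α δ (u 0) ≤ truncPotential α δ δ) (s : ℝ) :
    u s ∈ Icc δ (u 0) := by
  obtain ⟨K, hK⟩ := exists_lipschitzWith_truncForce hα.le hδ
  exact mem_Icc_of_le_of_strictAntiOn_of_strictMonoOn (strictAntiOn_truncPotential hα hδ hδ1)
    (strictMonoOn_truncPotential hα hδ) hδ1.le h0 hpot
    (hu.potential_le hK.continuous (hasDerivAt_truncPotential hα.le hδ) s)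

lemma exists_isRadialSol_normalizedForce_radialMean_eq_zero {n k : ℕ} {α L : ℝ} (hα : 1 ≤ α)
    (hL : 0 < L) (hkL : 2 * n + 4 * k * Real.pi ≤ L) :
    ∃ u : Fin k → ℝ → ℝ, Function.Injective (fun i ↦ u i 0) ∧ ∀ i, 1 < u i 0 ∧
      (∀ s, 0 < u i s) ∧ IsRadialSol n (normalizedForce α) (u i) ∧
      radialMean n (normalizedForce α ∘ u i) L = 0 := by
  have hα0 : 0 < α := one_pos.trans_le hα
  have hM : 2 ≤ L ^ 2 + 2 := le_add_of_nonneg_left (sq_nonneg L)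
  obtain ⟨δ, hδ, hδ1, hδM⟩ := exists_truncPotential_le hα (one_le_two.trans hM)
  obtain ⟨K, hK⟩ := exists_lipschitzWith_truncForce hα0.le hδ
  have htrap (u : ℝ → ℝ) (hu : IsRadialSol n (truncForce α δ) u) (h0 : u 0 ∈ Icc 2 (L ^ 2 + 2)) :
      ∀ s, u s ∈ Icc δ (u 0) := by
    have hu0 : 1 ≤ u 0 := one_le_two.trans h0.1
    refine hu.mem_Icc_of_truncForce hα0 hδ hδ1 hu0 (le_trans ?_ hδM)
    exact (strictMonoOn_truncPotential hα0 hδ).monotoneOn hu0 (one_le_two.trans hM) h0.2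
  have hcoercive (u : ℝ → ℝ) (hu : IsRadialSol n (truncForce α δ) u) (h0 : u 0 = 2) (s : ℝ) :
      (u s - 1) * truncForce α δ (u s) ≤ -(1 / 2) * (u s - 1) ^ 2 := by
    have hs := htrap u hu (by simp only [h0, left_mem_Icc, hM]) s
    exact sub_one_mul_truncForce_le hα hδ hs.1 (h0 ▸ hs.2)
  obtain ⟨u, hinj, hu⟩ := exists_isRadialSol_radialMean_eq_zero (k := k) hK
    (truncForce_one hδ1.le) (fun x ↦ sub_one_mul_truncForce_neg hα0 hδ hδ1)
    (neg_one_le_truncForce hδ.le) one_half_pos (by norm_num) hcoercive one_lt_two hM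
    (by linarith) hL (by linarith)
  have hforce (i : Fin k) : truncForce α δ ∘ u i = normalizedForce α ∘ u i :=
    funext fun s ↦ congrArg (normalizedForce α) (max_eq_left (htrap _ (hu i).2.1 (hu i).1 s).1)
  exact ⟨u, hinj, fun i ↦ ⟨one_lt_two.trans_le (hu i).1.1,
    fun s ↦ hδ.trans_le (htrap _ (hu i).2.1 (hu i).1 s).1, (hu i).2.1.congr_force (hforce i),
    hforce i ▸ (hu i).2.2⟩⟩

/-! ### Smooth radial solutions -/

/-- The right-hand side `(1/α) x ^ (-α) - p` of the radial equation. -/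
def touchdownForce (α p x : ℝ) : ℝ := 1 / α * x ^ (-α) - p

/-- The constant solution `ξ = (α p) ^ (-1/α)`. -/
def equilibrium (α p : ℝ) : ℝ := (α * p) ^ (-(1 / α))

/-- An explicit admissible value of `p_k` in dimension `n + 1`, the same for all `α ≥ 1`. -/
def touchdownThreshold (n : ℕ) (R : ℝ) (k : ℕ) : ℝ := 1 + ((2 * n + 4 * k * Real.pi) / R) ^ 2

section SmoothSolutions

variable {n k : ℕ} {α p R x : ℝ} {h : ℝ → ℝ}

lemma equilibrium_pos (hα : 0 < α) (hp : 0 < p) : 0 < equilibrium α p := by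
  unfold equilibrium
  positivity

lemma equilibrium_le_one (hα : 0 < α) (hαp : 1 ≤ α * p) : equilibrium α p ≤ 1 :=
  Real.rpow_le_one_of_one_le_of_nonpos hαp (neg_nonpos.2 (by positivity))

lemma equilibrium_rpow_neg (hα : 0 < α) (hp : 0 < p) : equilibrium α p ^ (-α) = α * p := by
  rw [equilibrium, ← Real.rpow_mul (by positivity), neg_mul_neg, one_div_mul_cancel hα.ne',
    Real.rpow_one]

lemma touchdownForce_equilibrium_mul (hα : 0 < α) (hp : 0 < p) (hx : 0 ≤ x) :
    touchdownForce α p (equilibrium α p * x) = p * normalizedForce α x := by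
  rw [touchdownForce, normalizedForce, Real.mul_rpow (equilibrium_pos hα hp).le hx,
    equilibrium_rpow_neg hα hp]
  field

lemma IsRadialSol.isSmoothRadialSol (hh : IsRadialSol n (touchdownForce α p) h)
    (hpos : ∀ s, 0 < h s) (hR : 0 < R) (hmean : radialMean n (touchdownForce α p ∘ h) R = 0) :
    IsSmoothRadialSol (n + 1) α p R h := by
  have hforce : Continuous (touchdownForce α p ∘ h) :=
    (continuous_const.mul (hh.continuous.rpow_const fun s ↦ .inl (hpos s).ne')).sub
      continuous_const
  refine ⟨fun r _ ↦ hpos r, (hh.contDiff_two hforce).contDiffOn, fun r hr ↦ ?_, ?_, ?_⟩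
  · simpa [touchdownForce] using hh.deriv_deriv_add hforce hr.1.ne'
  · simpa using (hh 0).hasDerivWithinAt.derivWithin (uniqueDiffOn_Icc hR 0 ⟨le_rfl, hR.le⟩)
  · simpa [hmean] using
      (hh R).hasDerivWithinAt.derivWithin (uniqueDiffOn_Icc hR R ⟨hR.le, le_rfl⟩)

lemma force_eq_zero_of_radialMean_eq_zero {F u : ℝ → ℝ} {L : ℝ} (hL : 0 ≤ L)
    (hconst : ∀ s ∈ Icc 0 L, u s = u 0) (hmean : radialMean n (F ∘ u) L = 0) : F (u 0) = 0 := by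
  have hF : radialMean n (F ∘ u) L = radialMean n (fun _ ↦ F (u 0)) L :=
    radialMean_congr fun τ hτ ↦
      congrArg F (hconst _ ⟨mul_nonneg hL hτ.1, mul_le_of_le_one_right hL hτ.2⟩)
  rw [hmean, radialMean_const, eq_comm, div_eq_zero_iff] at hF
  exact hF.resolve_right (by positivity)

lemma exists_nonconstant_isSmoothRadialSol (hα : 1 ≤ α) (hR : 0 < R)
    (hp : touchdownThreshold n R k < p) :
    ∃ f : Fin k → ℝ → ℝ, Function.Injective (fun i ↦ f i 0) ∧ ∀ i,
      IsSmoothRadialSol (n + 1) α p R (f i) ∧ ¬ ∀ r ∈ Icc 0 R, f i r = f i 0 := by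
  rw [touchdownThreshold] at hp
  have hα0 : 0 < α := one_pos.trans_le hα
  have hp1 : 1 < p := lt_of_le_of_lt (le_add_of_nonneg_right (sq_nonneg _)) hp
  have hp0 : 0 < p := one_pos.trans hp1
  set ξ := equilibrium α p
  have hξ : 0 < ξ := equilibrium_pos hα0 hp0
  set l := √(p / ξ)
  have hl : 0 < l := Real.sqrt_pos.2 (div_pos hp0 hξ)
  have hξl : ξ * l ^ 2 = p := by
    rw [Real.sq_sqrt (div_pos hp0 hξ).le, mul_div_cancel₀ _ hξ.ne']
  have hlR : 2 * n + 4 * k * Real.pi ≤ l * R := by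
    rw [← div_le_iff₀ hR]
    refine Real.le_sqrt_of_sq_le ?_
    have : p ≤ p / ξ := le_div_self hp0.le hξ (equilibrium_le_one hα0 (by nlinarith))
    linarith
  obtain ⟨u, hinj, hu⟩ :=
    exists_isRadialSol_normalizedForce_radialMean_eq_zero hα (mul_pos hl hR) hlR
  have hscale (i : Fin k) (s : ℝ) :
      touchdownForce α p (ξ * u i s) = ξ * l ^ 2 * normalizedForce α (u i s) := by
    rw [touchdownForce_equilibrium_mul hα0 hp0 ((hu i).2.1 s).le, hξl]
  have hmean (i : Fin k) : radialMean n (touchdownForce α p ∘ fun s ↦ ξ * u i (l * s)) R = 0 := by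
    rw [radialMean_comp_rescale (hscale i), (hu i).2.2.2, mul_zero]
  refine ⟨fun i s ↦ ξ * u i (l * s), fun i j hij ↦ hinj ?_, fun i ↦
    ⟨((hu i).2.2.1.const_mul_comp_mul (hscale i)).isSmoothRadialSol
      (fun s ↦ mul_pos hξ ((hu i).2.1 _)) hR (hmean i), fun hconst ↦ ?_⟩⟩
  · simpa [hξ.ne'] using hij
  · have hforce := force_eq_zero_of_radialMean_eq_zero hR.le hconst (hmean i)
    rw [hscale, hξl, mul_zero] at hforce
    exact (mul_neg_of_pos_of_neg hp0 (normalizedForce_neg hα0 (hu i).1)).ne hforce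

end SmoothSolutions

theorem exists_pk_many_nontrivial_solutions_general (N : ℕ) (hN : 1 ≤ N) (R : ℝ) (hR : 0 < R) :
    ∃ pseq : ℕ → ℝ, (∀ k, 0 < pseq k) ∧ Monotone pseq ∧
      ∀ α : ℝ, 1 ≤ α → ∀ (k : ℕ) (p : ℝ), pseq k < p →
        ∃ f : Fin k → (ℝ → ℝ),
          (∀ i j : Fin k, i ≠ j → ∃ r ∈ Icc (0 : ℝ) R, f i r ≠ f j r) ∧
          ∀ i : Fin k, IsSmoothRadialSol N α p R (f i) ∧
            ¬ (∀ r ∈ Icc (0 : ℝ) R, f i r = f i 0) := by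
  obtain ⟨n, rfl⟩ := Nat.exists_eq_add_of_le' hN
  refine ⟨touchdownThreshold n R, fun k ↦ ?_, fun k l hkl ↦ ?_, fun α hα k p hp ↦ ?_⟩
  · unfold touchdownThreshold
    positivity
  · unfold touchdownThreshold
    gcongr
  · obtain ⟨f, hinj, hf⟩ := exists_nonconstant_isSmoothRadialSol hα hR hp
    exact ⟨f, fun i j hij ↦ ⟨0, left_mem_Icc.2 hR.le, hinj.ne hij⟩, hf⟩

/-- For `N ≥ 2`, `α > 1` and any `R > 0`, there is a nondecreasing sequence `(p_k)` of
positive reals such that for every `k ≥ 1` and every `p > p_k`, the Neumann problem for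
`Δh = (1/α) h^(-α) - p` in `B_R(0)` has at least `k` pairwise distinct nonconstant
positive smooth radial solutions. -/
theorem exists_pk_many_nontrivial_solutions
    (N : ℕ) (hN : 2 ≤ N) (α : ℝ) (hα : 1 < α) (R : ℝ) (hR : 0 < R) :
    ∃ pseq : ℕ → ℝ, (∀ k, 0 < pseq k) ∧ Monotone pseq ∧
      ∀ k : ℕ, 1 ≤ k → ∀ p : ℝ, pseq k < p →
        ∃ f : Fin k → (ℝ → ℝ),
          (∀ i j : Fin k, i ≠ j → ∃ r ∈ Icc (0 : ℝ) R, f i r ≠ f j r) ∧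
          ∀ i : Fin k, IsSmoothRadialSol N α p R (f i) ∧
            ¬ (∀ r ∈ Icc (0 : ℝ) R, f i r = f i 0) := by
  obtain ⟨pseq, hpos, hmono, hsol⟩ :=
    exists_pk_many_nontrivial_solutions_general N (one_le_two.trans hN) R hR
  exact ⟨pseq, hpos, hmono, fun k _ p hp ↦ hsol α hα.le k p hp⟩
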